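/- Let d ≥ 1 and k ≥ 1, let G = (V,D) be a graph with no isolated vertices, let G*v be the cone of G over a new vertex v, and let Y be the set of monochromatic vertices of G (with respect to the principal partition of D, when D is a k-fold R_d-circuit). Then: (a) D is a k-fold R_d-circuit if and only if E(G*v) is a k-fold R_{d+1}-circuit; (b) if D is a k-fold R_d-circuit with principal partition 𝒜 and A_i ∈ 𝒜, then A_i' = A_i ∪ {uv : u ∈ Y and u is incident to an edge of A_i} is a part of the principal partition of the k-fold R_{d+1}-circuit E(G*v). -/

import Mathlib

open scoped BigOperators

/-- The row of the `d`-dimensional rigidity matrix of a realisation `p : V → ℝ^d`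
indexed by the (unordered) edge `e`. -/
noncomputable def rigRow (d : ℕ) {V : Type*} [DecidableEq V]
    (p : V → Fin d → ℝ) (e : Sym2 V) : V × Fin d → ℝ :=
  Sym2.lift
    ⟨fun u v wi =>
        (((if wi.1 = u then (1 : ℝ) else 0) - (if wi.1 = v then (1 : ℝ) else 0)) *
          (p u wi.2 - p v wi.2)),
      fun u v => by funext wi; ring⟩ e

/-- A realisation is generic if the coordinates of the points form an algebraically
independent set over `ℚ`. -/
def Generic (d : ℕ) {V : Type*} (p : V → Fin d → ℝ) : Prop :=
  AlgebraicIndependent ℚ fun vi : V × Fin d => p vi.1 vi.2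

/-- `rrk d p F` : the rank of the set of rows of the rigidity matrix of `(K_V, p)`
indexed by the edges in `F`.  For generic `p` this is the rank function `r_d` of
the generic `d`-dimensional rigidity matroid. -/
noncomputable def rrk (d : ℕ) {V : Type*} [Fintype V] [DecidableEq V]
    (p : V → Fin d → ℝ) (F : Set (Sym2 V)) : ℕ :=
  Module.finrank ℝ (Submodule.span ℝ (rigRow d p '' F))

/-- `D` is a `k`-fold circuit (with respect to the realisation `p`) :
`r (D \ {f}) = r D` for every `f ∈ D`, and `r D = |D| - k`. -/
def IsKFoldCircuit (d : ℕ) {V : Type*} [Fintype V] [DecidableEq V]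
    (p : V → Fin d → ℝ) (D : Finset (Sym2 V)) (k : ℕ) : Prop :=
  (∀ f ∈ D, rrk d p (↑D \ {f}) = rrk d p ↑D) ∧ rrk d p ↑D + k = D.card

/-- An `R_d`-circuit: `r C = |C| - 1` and `r (C \ {f}) = r C` for all `f ∈ C`. -/
def IsCircuit (d : ℕ) {V : Type*} [Fintype V] [DecidableEq V]
    (p : V → Fin d → ℝ) (C : Finset (Sym2 V)) : Prop :=
  IsKFoldCircuit d p C 1

/-- `A` is a part of the principal partition of the `k`-fold circuit `D`:
the parts are the sets `D \ B` where `B` runs over the `(k-1)`-fold circuits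
contained in `D`. -/
def IsPrincipalPart (d : ℕ) {V : Type*} [Fintype V] [DecidableEq V]
    (p : V → Fin d → ℝ) (D : Finset (Sym2 V)) (k : ℕ) (A : Finset (Sym2 V)) : Prop :=
  ∃ B ⊆ D, IsKFoldCircuit d p B (k - 1) ∧ A = D \ B

/-- Closure in the rigidity matroid: all edges of `K_V` whose addition to `F`
does not increase the rank. -/
def rcl (d : ℕ) {V : Type*} [Fintype V] [DecidableEq V]
    (p : V → Fin d → ℝ) (F : Set (Sym2 V)) : Set (Sym2 V) :=
  {e | ¬ e.IsDiag ∧ rrk d p (insert e F) = rrk d p F}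

/-- A `k`-fold circuit `D` with principal partition `A_1, …, A_ℓ` is balanced if
`r_d (⋂ i, cl_d (D \ A_i)) = ℓ - k`. -/
def IsBalanced (d : ℕ) {V : Type*} [Fintype V] [DecidableEq V]
    (p : V → Fin d → ℝ) (D : Finset (Sym2 V)) (k : ℕ) : Prop :=
  rrk d p (⋂ A ∈ {A | IsPrincipalPart d p D k A}, rcl d p ↑(D \ A)) + k =
    Set.ncard {A | IsPrincipalPart d p D k A}

/-- A vertex is monochromatic if all edges of `D` incident with it lie in a single
part of the principal partition (and technicolour otherwise). -/
def Monochromatic (d : ℕ) {V : Type*} [Fintype V] [DecidableEq V]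
    (p : V → Fin d → ℝ) (D : Finset (Sym2 V)) (k : ℕ) (w : V) : Prop :=
  ∃ A, IsPrincipalPart d p D k A ∧ ∀ e ∈ D, w ∈ e → e ∈ A

/-- The graph `(W, E)` is `R_d`-rigid: it is a complete graph on at most `d+1`
vertices, or `r_d(E) = d|W| - (d+1 choose 2)`. -/
def IsRigidOn (d : ℕ) {V : Type*} [Fintype V] [DecidableEq V]
    (p : V → Fin d → ℝ) (W : Finset V) (E : Finset (Sym2 V)) : Prop :=
  (W.card ≤ d + 1 ∧ ∀ u ∈ W, ∀ w ∈ W, u ≠ w → s(u, w) ∈ E) ∨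
    (rrk d p ↑E : ℤ) + ((d + 1).choose 2 : ℤ) = (d : ℤ) * (W.card : ℤ)

/-- The edge set of the cone of (the graph with edge set) `D` over a new vertex,
realised as `none : Option V`. -/
def coneEdges {V : Type*} [Fintype V] [DecidableEq V] (D : Finset (Sym2 V)) :
    Finset (Sym2 (Option V)) :=
  D.image (Sym2.map Option.some) ∪
    Finset.univ.image fun u : V => s((Option.some u : Option V), (none : Option V))

/-- The degree of the vertex `w` in the edge set `D`. -/
def degIn {V : Type*} [Fintype V] [DecidableEq V] (D : Finset (Sym2 V)) (w : V) : ℕ :=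
  (D.filter fun e => w ∈ e).card

/-- The set of vertices incident with an edge of `F`. -/
def esupp {V : Type*} [Fintype V] [DecidableEq V] (F : Finset (Sym2 V)) : Finset V :=
  Finset.univ.filter fun w => ∃ e ∈ F, w ∈ e

/-!
Projecting a cone in `ℝ^(d+1)` centrally from its apex to a hyperplane maps the span of its rows
onto the row span of the base graph in `ℝ^d`, and the rows of the cone edges lie in the kernel.
The kernel is detected by the last coordinates at the joined vertices, so it has dimension at most
their number `|W|`. Since generic realisations maximise ranks, and a generic `p` is the projection
of its lift to height `1`, the cone has generic rank `r_d(F) + |W|` whenever `W` contains every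
vertex of `F`. This settles everything about edges of the base.

A cone edge at `u` can be deleted without losing rank when `u` lies on an edge `uw` whose deletion
does not change `r_d(F)`: lifting only `w` to a different height produces a kernel vector nonzero
at `u` and outside the span of the other cone edges, so a special realisation, hence every generic
one, already attains the full rank without that edge.

Distinct parts of the principal partition are disjoint. Hence the monochromatic vertices meeting a
part `A` are those of `D` that no edge of `D \ A` covers, and the cone of `D` minus the cone of
`D \ A` is the extended part.
-/

section LinearAlgebra

theorem finrank_span_insert_eq_iff {K M : Type*} [DivisionRing K] [AddCommGroup M] [Module K M]
    [FiniteDimensional K M] {s : Set M} {x : M} :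
    Module.finrank K (Submodule.span K (insert x s)) = Module.finrank K (Submodule.span K s) ↔
      x ∈ Submodule.span K s := by
  refine ⟨fun h => ?_, fun h => by rw [Submodule.span_insert_eq_span h]⟩
  rw [Submodule.eq_of_le_of_finrank_eq (Submodule.span_mono (Set.subset_insert x s)) h.symm]
  exact Submodule.subset_span (Set.mem_insert x s)

theorem finrank_map_add_finrank_inf_ker {K M N : Type*} [DivisionRing K] [AddCommGroup M]
    [Module K M] [AddCommGroup N] [Module K N] (S : Submodule K M) [FiniteDimensional K S]
    (f : M →ₗ[K] N) :
    Module.finrank K (S.map f) + Module.finrank K ↥(S ⊓ LinearMap.ker f) = Module.finrank K S := by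
  rw [← Submodule.map_comap_subtype, Submodule.finrank_map_subtype_eq, ← LinearMap.ker_domRestrict,
    ← LinearMap.range_domRestrict, LinearMap.finrank_range_add_finrank_ker]

theorem exists_linearIndependent_submatrix_row {K m n : Type*} [Field K] [Finite m] [Fintype n]
    (A : Matrix m n K) {k : ℕ} (hk : A.rank = k) :
    ∃ r : Fin k → m, LinearIndependent K (A.submatrix r id).row := by
  obtain ⟨κ, a, ha, hspan, hli⟩ := exists_linearIndependent' K A.row
  have := Fintype.ofFinite m
  have := Fintype.ofInjective a ha
  have hcard : Fintype.card κ = k := by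
    rw [← hk, A.rank_eq_finrank_span_row, ← hspan, finrank_span_eq_card hli]
  let equiv := Fintype.equivFinOfCardEq hcard
  exact ⟨a ∘ equiv.symm, hli.comp _ equiv.symm.injective⟩

theorem exists_submatrix_det_ne_zero {K m n : Type*} [Field K] [Finite m] [Fintype n]
    (A : Matrix m n K) :
    ∃ (r : Fin A.rank → m) (c : Fin A.rank → n), (A.submatrix r c).det ≠ 0 := by
  obtain ⟨r, hr⟩ := exists_linearIndependent_submatrix_row A rfl
  have hrank : (A.submatrix r id).transpose.rank = A.rank := by
    rw [Matrix.rank_transpose, hr.rank_matrix, Fintype.card_fin]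
  obtain ⟨c, hc⟩ := exists_linearIndependent_submatrix_row _ hrank
  refine ⟨r, c, ?_⟩
  rw [← Matrix.det_transpose]
  exact ((Matrix.isUnit_iff_isUnit_det _).1
    (Matrix.linearIndependent_rows_iff_isUnit.1 hc)).ne_zero

-- Ranks are detected by minors, and injective ring homomorphisms kill no minor.
theorem rank_map_le_rank_map_of_injective {R K L m n : Type*} [CommRing R] [Field K] [Field L]
    [Finite m] [Fintype n] {φ : R →+* K} (hφ : Function.Injective φ) (ψ : R →+* L)
    (A : Matrix m n R) : (A.map ψ).rank ≤ (A.map φ).rank := by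
  obtain ⟨r, c, hψ⟩ := exists_submatrix_det_ne_zero (A.map ψ)
  have hdet : (A.submatrix r c).det ≠ 0 := fun h =>
    hψ ((ψ.map_det (A.submatrix r c)).symm.trans (by rw [h, map_zero]))
  have hφdet : ((A.map φ).submatrix r c).det ≠ 0 :=
    (φ.map_det (A.submatrix r c)).symm.trans_ne ((map_ne_zero_iff φ hφ).2 hdet)
  calc (A.map ψ).rank = ((A.map φ).submatrix r c).rank := by
        rw [Matrix.rank_of_det_ne_zero hφdet, Fintype.card_fin]
    _ ≤ (A.map φ).rank := Matrix.rank_submatrix_le _ _ _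

end LinearAlgebra

section Rank

variable {d : ℕ} {V : Type*} [DecidableEq V]

/-- The rigidity matrix of `K_V` with indeterminates as the coordinates of the points; every
realisation specialises it to its own rigidity matrix. -/
noncomputable def universalRigidityMatrix (d : ℕ) (V : Type*) [DecidableEq V] :
    Matrix (Sym2 V) (V × Fin d) (MvPolynomial (V × Fin d) ℚ) :=
  Matrix.of <| Sym2.lift
    ⟨fun u v wi => ((if wi.1 = u then 1 else 0) - (if wi.1 = v then 1 else 0)) *
        (MvPolynomial.X (u, wi.2) - MvPolynomial.X (v, wi.2)),
      fun u v => by funext wi; ring⟩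

theorem universalRigidityMatrix_map_aeval (p : V → Fin d → ℝ) :
    (universalRigidityMatrix d V).map
        (MvPolynomial.aeval (R := ℚ) fun vi : V × Fin d => p vi.1 vi.2) =
      Matrix.of (rigRow d p) := by
  ext e wi
  induction e with | _ u v =>
  simp only [universalRigidityMatrix, rigRow, Matrix.map_apply, Matrix.of_apply, Sym2.lift_mk,
    map_mul, map_sub, MvPolynomial.aeval_X, apply_ite, map_one, map_zero]

theorem sum_rigRow [Fintype V] (p : V → Fin d → ℝ) (e : Sym2 V) (i : Fin d) :
    ∑ w, rigRow d p e (w, i) = 0 := by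
  induction e with | _ u v =>
  simp [rigRow, ← Finset.sum_mul]

theorem rigRow_mk_apply_left (p : V → Fin d → ℝ) (u v : V) (i : Fin d) :
    rigRow d p s(u, v) (u, i) = p u i - p v i := by
  by_cases huv : u = v <;> simp [rigRow, huv]

theorem rigRow_apply_of_notMem (p : V → Fin d → ℝ) {e : Sym2 V} {w : V} (hw : w ∉ e)
    (i : Fin d) : rigRow d p e (w, i) = 0 := by
  induction e with | _ u v =>
  simp only [Sym2.mem_iff, not_or] at hw
  simp [rigRow, hw.1, hw.2]

theorem apply_eq_zero_of_mem_span_rigRow {p : V → Fin d → ℝ} {F : Set (Sym2 V)} {y : V × Fin d → ℝ}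
    (hy : y ∈ Submodule.span ℝ (rigRow d p '' F)) {w : V} {i : Fin d}
    (hF : ∀ e ∈ F, rigRow d p e (w, i) = 0) : y (w, i) = 0 :=
  have hle : Submodule.span ℝ (rigRow d p '' F) ≤
      LinearMap.ker (LinearMap.proj (R := ℝ) (φ := fun _ => ℝ) (w, i)) :=
    Submodule.span_le.2 <| Set.image_subset_iff.2 hF
  hle hy

variable [Fintype V] (p : V → Fin d → ℝ)

theorem rrk_eq_rank (F : Set (Sym2 V)) :
    rrk d p F = (Matrix.of fun e : F => rigRow d p e).rank := by
  rw [Matrix.rank_eq_finrank_span_row, rrk, Set.image_eq_range]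
  rfl

variable {p} in
theorem Generic.rrk_le_rrk (hp : Generic d p) (p' : V → Fin d → ℝ) (F : Set (Sym2 V)) :
    rrk d p' F ≤ rrk d p F := by
  have hmap (p : V → Fin d → ℝ) : (Matrix.of fun e : F => rigRow d p e) =
      ((universalRigidityMatrix d V).submatrix ((↑) : F → Sym2 V) id).map
        (MvPolynomial.aeval (R := ℚ) fun vi : V × Fin d => p vi.1 vi.2).toRingHom :=
    congrArg (·.submatrix ((↑) : F → Sym2 V) id) (universalRigidityMatrix_map_aeval p).symm
  rw [rrk_eq_rank, rrk_eq_rank, hmap, hmap]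
  exact rank_map_le_rank_map_of_injective hp _ _

theorem rrk_mono {F G : Set (Sym2 V)} (h : F ⊆ G) : rrk d p F ≤ rrk d p G :=
  Submodule.finrank_mono (Submodule.span_mono (Set.image_mono h))

theorem rrk_erase_eq_iff {F : Finset (Sym2 V)} {f : Sym2 V} (hf : f ∈ F) :
    rrk d p ↑(F.erase f) = rrk d p ↑F ↔
      rigRow d p f ∈ Submodule.span ℝ (rigRow d p '' ↑(F.erase f)) := by
  rw [← finrank_span_insert_eq_iff, ← Set.image_insert_eq, ← Finset.coe_insert,
    Finset.insert_erase hf]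
  exact eq_comm

theorem rrk_le_rrk_add_card_sdiff (B C : Finset (Sym2 V)) :
    rrk d p ↑C ≤ rrk d p ↑B + (C \ B).card := by
  have hunion : rigRow d p '' ↑C ⊆ rigRow d p '' ↑B ∪ ↑((C \ B).image (rigRow d p)) := by
    rw [Finset.coe_image, ← Set.image_union, ← Finset.coe_union, Finset.union_sdiff_self_eq_union]
    exact Set.image_mono (Finset.coe_subset.2 Finset.subset_union_right)
  calc rrk d p ↑C
      ≤ Module.finrank ℝ ↥(Submodule.span ℝ (rigRow d p '' ↑B) ⊔
          Submodule.span ℝ ↑((C \ B).image (rigRow d p))) := by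
        rw [← Submodule.span_union]
        exact Submodule.finrank_mono (Submodule.span_mono hunion)
    _ ≤ rrk d p ↑B + ((C \ B).image (rigRow d p)).card :=
        (Submodule.finrank_add_le_finrank_add_finrank _ _).trans
          (Nat.add_le_add_left (finrank_span_finset_le_card _) _)
    _ ≤ rrk d p ↑B + (C \ B).card := Nat.add_le_add_left Finset.card_image_le _

variable {p}

theorem sum_eq_zero_of_mem_span_rigRow {F : Set (Sym2 V)} {y : V × Fin d → ℝ}
    (hy : y ∈ Submodule.span ℝ (rigRow d p '' F)) (i : Fin d) : ∑ w, y (w, i) = 0 := by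
  have hle : Submodule.span ℝ (rigRow d p '' F) ≤
      LinearMap.ker (∑ w : V, LinearMap.proj (R := ℝ) (φ := fun _ => ℝ) (w, i)) :=
    Submodule.span_le.2 <| Set.image_subset_iff.2 fun e _ => by simp [sum_rigRow]
  simpa using hle hy

end Rank

section Cone

variable {d : ℕ} {V : Type*}

/-- The height of the vertex `u` of a cone above the apex `none`, measured along the last
coordinate. -/
def coneHeight (q : Option V → Fin (d + 1) → ℝ) (u : V) : ℝ :=
  q (some u) (Fin.last d) - q none (Fin.last d)

/-- The central projection from the apex `none` of a cone onto the hyperplane at height `1`,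
in coordinates centred at the apex (a junk value if the height of the vertex is `0`). -/
noncomputable def centralProjection (q : Option V → Fin (d + 1) → ℝ) (u : V) (i : Fin d) : ℝ :=
  (q (some u) i.castSucc - q none i.castSucc) / coneHeight q u

/-- The linear map of row spaces induced by the central projection: at each vertex it eliminates
the last coordinate along the cone edge, so that it kills the rows of all cone edges. -/
def coneRowMap (q : Option V → Fin (d + 1) → ℝ) :
    (Option V × Fin (d + 1) → ℝ) →ₗ[ℝ] (V × Fin d → ℝ) where
  toFun y ui := coneHeight q ui.1 * y (some ui.1, ui.2.castSucc) -
    (q (some ui.1) ui.2.castSucc - q none ui.2.castSucc) * y (some ui.1, Fin.last d)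
  map_add' y z := by funext ui; simp only [Pi.add_apply]; ring
  map_smul' c y := by funext ui; simp only [Pi.smul_apply, smul_eq_mul, RingHom.id_apply]; ring

/-- The realisation of a cone with apex at the origin that places the vertex `u` at height `h u`
on the line through the apex and the point `(p u, 1)`. -/
def coneLift (p : V → Fin d → ℝ) (h : V → ℝ) : Option V → Fin (d + 1) → ℝ
  | none => 0
  | some u => Fin.snoc (h u • p u) (h u)

theorem coneHeight_coneLift (p : V → Fin d → ℝ) (h : V → ℝ) : coneHeight (coneLift p h) = h := by
  funext u
  simp [coneHeight, coneLift]

theorem centralProjection_coneLift (p : V → Fin d → ℝ) {h : V → ℝ} (hh : ∀ u, h u ≠ 0) :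
    centralProjection (coneLift p h) = p := by
  funext u i
  simp [centralProjection, coneHeight_coneLift, coneLift, hh u]

theorem Generic.coneHeight_ne_zero {q : Option V → Fin (d + 1) → ℝ} (hq : Generic (d + 1) q)
    (u : V) : coneHeight q u ≠ 0 := by
  intro h
  have := hq.injective (a₁ := (some u, Fin.last d)) (a₂ := (none, Fin.last d)) (sub_eq_zero.1 h)
  simp at this

theorem map_some_ne_mk_none (f : Sym2 V) (u : V) : Sym2.map some f ≠ s(some u, none) := by
  induction f with | _ a b =>
  simp

variable [DecidableEq V]

/-- The cone over the edge set `F` in which the apex `none` is joined only to the vertices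
in `W`. -/
def coneOn (F : Finset (Sym2 V)) (W : Finset V) : Finset (Sym2 (Option V)) :=
  F.image (Sym2.map some) ∪ W.image fun u => s(some u, none)

theorem mem_coneOn {F : Finset (Sym2 V)} {W : Finset V} {e : Sym2 (Option V)} :
    e ∈ coneOn F W ↔ (∃ f ∈ F, e = Sym2.map some f) ∨ ∃ u ∈ W, e = s(some u, none) := by
  simp [coneOn, eq_comm]

@[simp]
theorem map_some_mem_coneOn {F : Finset (Sym2 V)} {W : Finset V} {f : Sym2 V} :
    Sym2.map some f ∈ coneOn F W ↔ f ∈ F := by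
  simp [coneOn, (Sym2.map.injective (Option.some_injective V)).eq_iff,
    (map_some_ne_mk_none f _).symm]

@[simp]
theorem mk_none_mem_coneOn {F : Finset (Sym2 V)} {W : Finset V} {u : V} :
    s(some u, none) ∈ coneOn F W ↔ u ∈ W := by
  simp [coneOn, map_some_ne_mk_none]

theorem coneOn_mono {F G : Finset (Sym2 V)} {W U : Finset V} (hF : F ⊆ G) (hW : W ⊆ U) :
    coneOn F W ⊆ coneOn G U :=
  Finset.union_subset_union (Finset.image_subset_image hF) (Finset.image_subset_image hW)

theorem coneOn_sdiff_coneOn (F G : Finset (Sym2 V)) (W U : Finset V) :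
    coneOn F W \ coneOn G U = coneOn (F \ G) (W \ U) := by
  ext e
  simp only [Finset.mem_sdiff, mem_coneOn (F := F), mem_coneOn (F := F \ G)]
  constructor
  · rintro ⟨⟨f, hf, rfl⟩ | ⟨u, hu, rfl⟩, he⟩
    · exact Or.inl ⟨f, ⟨hf, by simpa using he⟩, rfl⟩
    · exact Or.inr ⟨u, ⟨hu, by simpa using he⟩, rfl⟩
  · rintro (⟨f, ⟨hf, hfG⟩, rfl⟩ | ⟨u, ⟨hu, huU⟩, rfl⟩)
    · exact ⟨Or.inl ⟨f, hf, rfl⟩, by simpa using hfG⟩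
    · exact ⟨Or.inr ⟨u, hu, rfl⟩, by simpa using huU⟩

theorem coneOn_erase_map_some (F : Finset (Sym2 V)) (W : Finset V) (f : Sym2 V) :
    (coneOn F W).erase (Sym2.map some f) = coneOn (F.erase f) W := by
  simpa [Finset.sdiff_singleton_eq_erase, coneOn] using coneOn_sdiff_coneOn F {f} W ∅

theorem coneOn_erase_mk_none (F : Finset (Sym2 V)) (W : Finset V) (u : V) :
    (coneOn F W).erase s(some u, none) = coneOn F (W.erase u) := by
  simpa [Finset.sdiff_singleton_eq_erase, coneOn] using coneOn_sdiff_coneOn F ∅ W {u}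

theorem card_coneOn (F : Finset (Sym2 V)) (W : Finset V) :
    (coneOn F W).card = F.card + W.card := by
  have hdisj : Disjoint (F.image (Sym2.map some)) (W.image fun u => s(some u, none)) := by
    simp [Finset.disjoint_left, (map_some_ne_mk_none _ _).symm]
  rw [coneOn, Finset.card_union_of_disjoint hdisj,
    Finset.card_image_of_injective _ (Sym2.map.injective (Option.some_injective V)),
    Finset.card_image_of_injective _ fun u v h => by simpa using h]

section RowMap

variable {q : Option V → Fin (d + 1) → ℝ}

theorem coneRowMap_rigRow_map_some (hq : ∀ u, coneHeight q u ≠ 0) (f : Sym2 V) :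
    ∃ c : ℝˣ, coneRowMap q (rigRow (d + 1) q (Sym2.map some f)) =
      c • rigRow d (centralProjection q) f := by
  induction f with | _ u v =>
  refine ⟨Units.mk0 (coneHeight q u * coneHeight q v) (mul_ne_zero (hq u) (hq v)), ?_⟩
  funext ⟨w, i⟩
  have hend (hw : w = u ∨ w = v) :
      coneHeight q w * (q (some u) i.castSucc - q (some v) i.castSucc) -
        (q (some w) i.castSucc - q none i.castSucc) *
          (q (some u) (Fin.last d) - q (some v) (Fin.last d)) =
      coneHeight q u * coneHeight q v * (centralProjection q u i - centralProjection q v i) := by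
    have hu := hq u
    have hv := hq v
    obtain rfl | rfl := hw <;> simp only [centralProjection] <;> field_simp <;>
      simp only [coneHeight] <;> ring
  simp only [coneRowMap, rigRow, Sym2.map_mk, Sym2.lift_mk, LinearMap.coe_mk, AddHom.coe_mk,
    Pi.smul_apply, Units.smul_def, Units.val_mk0, smul_eq_mul, Option.some_inj]
  by_cases hw : w = u ∨ w = v
  · linear_combination
      ((if w = u then 1 else 0) - (if w = v then 1 else 0)) * hend hw
  · simp [not_or.1 hw]

theorem rigRow_mk_none_apply_some (q : Option V → Fin (d + 1) → ℝ) (u w : V) (i : Fin (d + 1)) :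
    rigRow (d + 1) q s(some u, none) (some w, i) =
      if w = u then q (some u) i - q none i else 0 := by
  simp [rigRow]

theorem coneRowMap_rigRow_mk_none (q : Option V → Fin (d + 1) → ℝ) (u : V) :
    coneRowMap q (rigRow (d + 1) q s(some u, none)) = 0 := by
  funext ⟨w, i⟩
  simp only [coneRowMap, LinearMap.coe_mk, AddHom.coe_mk, rigRow_mk_none_apply_some, coneHeight]
  split_ifs with hwu
  · rw [hwu, Pi.zero_apply]
    ring
  · simp

theorem map_coneRowMap_span_coneOn (hq : ∀ u, coneHeight q u ≠ 0) (F : Finset (Sym2 V))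
    (W : Finset V) :
    (Submodule.span ℝ (rigRow (d + 1) q '' ↑(coneOn F W))).map (coneRowMap q) =
      Submodule.span ℝ (rigRow d (centralProjection q) '' ↑F) := by
  rw [Submodule.map_span]
  apply le_antisymm <;> rw [Submodule.span_le]
  · rintro _ ⟨_, ⟨e, he, rfl⟩, rfl⟩
    obtain ⟨f, hf, rfl⟩ | ⟨u, -, rfl⟩ := mem_coneOn.1 he
    · obtain ⟨c, hc⟩ := coneRowMap_rigRow_map_some hq f
      rw [hc]
      exact Submodule.smul_mem _ (c : ℝ) (Submodule.subset_span ⟨f, hf, rfl⟩)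
    · rw [coneRowMap_rigRow_mk_none]
      exact Submodule.zero_mem _
  · rintro _ ⟨f, hf, rfl⟩
    obtain ⟨c, hc⟩ := coneRowMap_rigRow_map_some hq f
    rw [SetLike.mem_coe, ← Submodule.smul_mem_iff' _ c, ← hc]
    exact Submodule.subset_span ⟨_, ⟨_, map_some_mem_coneOn.2 hf, rfl⟩, rfl⟩

theorem span_coneOn_empty_le (hq : ∀ u, coneHeight q u ≠ 0) (F : Finset (Sym2 V))
    (W : Finset V) :
    Submodule.span ℝ (rigRow (d + 1) q '' ↑(coneOn ∅ W)) ≤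
      Submodule.span ℝ (rigRow (d + 1) q '' ↑(coneOn F W)) ⊓ LinearMap.ker (coneRowMap q) := by
  refine le_inf (Submodule.span_mono (Set.image_mono
    (coneOn_mono (Finset.empty_subset F) subset_rfl))) (LinearMap.le_ker_iff_map.2 ?_)
  rw [map_coneRowMap_span_coneOn hq, Finset.coe_empty, Set.image_empty, Submodule.span_empty]

end RowMap

theorem rigRow_coneLift_apply_last_eq_zero (p : V → Fin d → ℝ) {h : V → ℝ} {u w : V}
    (hhu : ∀ t, h t = h u ↔ t ≠ w) {e : Sym2 V} (he : e ≠ s(u, w)) :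
    rigRow (d + 1) (coneLift p h) (Sym2.map some e) (some u, Fin.last d) = 0 := by
  by_cases hu : u ∈ e
  · obtain ⟨t, rfl⟩ := hu
    have htw : t ≠ w := by rintro rfl; exact he rfl
    simp [rigRow_mk_apply_left, coneLift, (hhu t).2 htw]
  · exact rigRow_apply_of_notMem _ (by simpa [Sym2.mem_map] using hu) _

section RankBounds

variable [Fintype V] {q : Option V → Fin (d + 1) → ℝ} {F : Finset (Sym2 V)} {W : Finset V}

theorem mem_esupp {u : V} : u ∈ esupp F ↔ ∃ f ∈ F, u ∈ f := by
  simp [esupp]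

theorem esupp_mono {G : Finset (Sym2 V)} (h : F ⊆ G) : esupp F ⊆ esupp G :=
  fun _ hu => mem_esupp.2 <| (mem_esupp.1 hu).imp fun _ => And.imp_left (@h _)

theorem mem_of_some_mem_of_mem_coneOn (hW : esupp F ⊆ W) {e : Sym2 (Option V)}
    (he : e ∈ coneOn F W) {u : V} (hu : some u ∈ e) : u ∈ W := by
  obtain ⟨f, hf, rfl⟩ | ⟨w, hw, rfl⟩ := mem_coneOn.1 he
  · obtain ⟨w, hw, hwu⟩ := Sym2.mem_map.1 hu
    exact hW (mem_esupp.2 ⟨f, hf, Option.some_inj.1 hwu ▸ hw⟩)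
  · obtain rfl : u = w := by simpa using hu
    exact hw

theorem eq_zero_of_mem_span_coneOn (hq : ∀ u, coneHeight q u ≠ 0) (hW : esupp F ⊆ W)
    {y : Option V × Fin (d + 1) → ℝ}
    (hy : y ∈ Submodule.span ℝ (rigRow (d + 1) q '' ↑(coneOn F W)))
    (hker : coneRowMap q y = 0) (hlast : ∀ u ∈ W, y (some u, Fin.last d) = 0) : y = 0 := by
  have hsome (u : V) (i : Fin (d + 1)) : y (some u, i) = 0 := by
    by_cases hu : u ∈ W
    · refine Fin.lastCases (hlast u hu) (fun i => ?_) i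
      have hui : coneHeight q u * y (some u, i.castSucc) -
          (q (some u) i.castSucc - q none i.castSucc) * y (some u, Fin.last d) = 0 :=
        congrFun hker (u, i)
      simpa [hlast u hu, hq u] using hui
    · exact apply_eq_zero_of_mem_span_rigRow hy fun e he =>
        rigRow_apply_of_notMem q (fun hue => hu (mem_of_some_mem_of_mem_coneOn hW he hue)) i
  funext ⟨w, i⟩
  cases w with
  | some u => exact hsome u i
  | none => simpa [Fintype.sum_option, hsome] using sum_eq_zero_of_mem_span_rigRow hy i

theorem rrk_coneOn_eq (hq : ∀ u, coneHeight q u ≠ 0) :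
    rrk (d + 1) q ↑(coneOn F W) = rrk d (centralProjection q) ↑F +
      Module.finrank ℝ ↥(Submodule.span ℝ (rigRow (d + 1) q '' ↑(coneOn F W)) ⊓
        LinearMap.ker (coneRowMap q)) := by
  rw [rrk, ← finrank_map_add_finrank_inf_ker _ (coneRowMap q), map_coneRowMap_span_coneOn hq, rrk]

theorem rrk_coneOn_empty (hq : ∀ u, coneHeight q u ≠ 0) (W : Finset V) :
    rrk (d + 1) q ↑(coneOn ∅ W) = W.card := by
  have hrange : rigRow (d + 1) q '' ↑(coneOn ∅ W) =
      Set.range fun u : W => rigRow (d + 1) q s(some (u : V), none) := by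
    ext y
    simp [coneOn]
  have hli : LinearIndependent ℝ fun u : W => rigRow (d + 1) q s(some (u : V), none) := by
    rw [Fintype.linearIndependent_iff]
    intro g hg u
    have hlast := congrFun hg (some u.1, Fin.last d)
    simp only [Finset.sum_apply, Pi.smul_apply, rigRow_mk_none_apply_some, smul_eq_mul, mul_ite,
      mul_zero, Pi.zero_apply, Subtype.coe_inj, Finset.sum_ite_eq, Finset.mem_univ, if_true]
      at hlast
    exact (mul_eq_zero.1 hlast).resolve_right (hq u)
  rw [rrk, hrange, finrank_span_eq_card hli, Fintype.card_coe]

theorem rrk_coneOn_le (hq : ∀ u, coneHeight q u ≠ 0) (hW : esupp F ⊆ W) :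
    rrk (d + 1) q ↑(coneOn F W) ≤ rrk d (centralProjection q) ↑F + W.card := by
  set S := Submodule.span ℝ (rigRow (d + 1) q '' ↑(coneOn F W))
  let lastCoord := LinearMap.funLeft ℝ ℝ fun u : W => (some (u : V), Fin.last d)
  have hinj : Function.Injective (lastCoord.domRestrict (S ⊓ LinearMap.ker (coneRowMap q))) := by
    rw [injective_iff_map_eq_zero]
    rintro ⟨y, hy, hker⟩ hlast
    exact Subtype.ext <| eq_zero_of_mem_span_coneOn hq hW hy hker fun u hu =>
      congrFun hlast ⟨u, hu⟩
  have hle := LinearMap.finrank_le_finrank_of_injective hinj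
  rw [Module.finrank_fintype_fun_eq_card, Fintype.card_coe] at hle
  rw [rrk_coneOn_eq hq]
  exact Nat.add_le_add_left hle _

theorem le_rrk_coneOn (hq : ∀ u, coneHeight q u ≠ 0) (F : Finset (Sym2 V)) (W : Finset V) :
    rrk d (centralProjection q) ↑F + W.card ≤ rrk (d + 1) q ↑(coneOn F W) := by
  rw [rrk_coneOn_eq hq, ← rrk_coneOn_empty hq W]
  exact Nat.add_le_add_left (Submodule.finrank_mono (span_coneOn_empty_le hq F W)) _

theorem lt_rrk_coneOn (hq : ∀ u, coneHeight q u ≠ 0) {u : V} (hu : u ∉ W)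
    {y : Option V × Fin (d + 1) → ℝ}
    (hy : y ∈ Submodule.span ℝ (rigRow (d + 1) q '' ↑(coneOn F W)))
    (hker : coneRowMap q y = 0) (hyu : y (some u, Fin.last d) ≠ 0) :
    rrk d (centralProjection q) ↑F + W.card < rrk (d + 1) q ↑(coneOn F W) := by
  set S := Submodule.span ℝ (rigRow (d + 1) q '' ↑(coneOn F W))
  have hy_spokes : y ∉ Submodule.span ℝ (rigRow (d + 1) q '' ↑(coneOn ∅ W)) := fun hmem =>
    hyu <| apply_eq_zero_of_mem_span_rigRow hmem fun e he => rigRow_apply_of_notMem q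
      (fun hue => hu (mem_of_some_mem_of_mem_coneOn (by simp [esupp]) he hue)) _
  have hlt : Submodule.span ℝ (rigRow (d + 1) q '' ↑(coneOn ∅ W)) <
      S ⊓ LinearMap.ker (coneRowMap q) :=
    SetLike.lt_iff_le_and_exists.2 ⟨span_coneOn_empty_le hq F W, y,
      Submodule.mem_inf.2 ⟨hy, LinearMap.mem_ker.2 hker⟩, hy_spokes⟩
  rw [rrk_coneOn_eq hq, ← rrk_coneOn_empty hq W]
  exact Nat.add_lt_add_left (Submodule.finrank_lt_finrank_of_lt hlt) _

end RankBounds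

section GenericRank

variable [Fintype V] {p : V → Fin d → ℝ} {q : Option V → Fin (d + 1) → ℝ} {F : Finset (Sym2 V)}
  {W : Finset V}

theorem rrk_coneOn_of_generic (hp : Generic d p) (hq : Generic (d + 1) q) (hW : esupp F ⊆ W) :
    rrk (d + 1) q ↑(coneOn F W) = rrk d p ↑F + W.card := by
  apply le_antisymm
  · calc rrk (d + 1) q ↑(coneOn F W)
        ≤ rrk d (centralProjection q) ↑F + W.card := rrk_coneOn_le hq.coneHeight_ne_zero hW
      _ ≤ rrk d p ↑F + W.card := Nat.add_le_add_right (hp.rrk_le_rrk _ _) _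
  · have hlift := le_rrk_coneOn (q := coneLift p 1) (by simp [coneHeight_coneLift]) F W
    rw [centralProjection_coneLift p (by simp)] at hlift
    exact hlift.trans (hq.rrk_le_rrk _ _)

-- If `w` is the only vertex not lifted to the height of `u`, then `uw` is the only edge whose
-- lifted row has a nonzero last coordinate at `u`; a dependence through `uw` therefore lifts to a
-- kernel vector that is nonzero there.
theorem exists_mem_span_coneOn_apply_ne_zero {h : V → ℝ} (hh : ∀ t, h t ≠ 0) {u w : V}
    (hhu : ∀ t, h t = h u ↔ t ≠ w) (hf : s(u, w) ∈ F)
    (hr : rrk d p ↑(F.erase s(u, w)) = rrk d p ↑F) (W : Finset V) :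
    ∃ y ∈ Submodule.span ℝ (rigRow (d + 1) (coneLift p h) '' ↑(coneOn F W)),
      coneRowMap (coneLift p h) y = 0 ∧ y (some u, Fin.last d) ≠ 0 := by
  set q := coneLift p h with hq
  have hheight : ∀ t, coneHeight q t ≠ 0 := by rwa [hq, coneHeight_coneLift]
  let row := rigRow (d + 1) q (Sym2.map some s(u, w))
  have hrow : row ∈ Submodule.span ℝ (rigRow (d + 1) q '' ↑(coneOn F W)) :=
    Submodule.subset_span ⟨_, map_some_mem_coneOn.2 hf, rfl⟩
  obtain ⟨z, hz, hzrow⟩ : ∃ z ∈ Submodule.span ℝ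
      (rigRow (d + 1) q '' ↑(coneOn (F.erase s(u, w)) ∅)), coneRowMap q z = coneRowMap q row := by
    obtain ⟨c, hc⟩ := coneRowMap_rigRow_map_some hheight s(u, w)
    rw [← Submodule.mem_map, map_coneRowMap_span_coneOn hheight, hc, hq,
      centralProjection_coneLift p hh]
    exact Submodule.smul_mem _ (c : ℝ) ((rrk_erase_eq_iff p hf).1 hr)
  have hzu : z (some u, Fin.last d) = 0 := by
    refine apply_eq_zero_of_mem_span_rigRow hz fun e he => ?_
    obtain ⟨f, hf, rfl⟩ | ⟨t, ht, -⟩ := mem_coneOn.1 he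
    · exact rigRow_coneLift_apply_last_eq_zero p hhu (Finset.ne_of_mem_erase hf)
    · exact absurd ht (Finset.notMem_empty t)
  have hrowu : row (some u, Fin.last d) = h u - h w := by
    simp [row, q, rigRow_mk_apply_left, coneLift]
  refine ⟨row - z, Submodule.sub_mem _ hrow (Submodule.span_mono (Set.image_mono <|
    Finset.coe_subset.2 <| coneOn_mono (Finset.erase_subset _ _) (Finset.empty_subset W)) hz),
    by rw [map_sub, hzrow, sub_self], ?_⟩
  rw [Pi.sub_apply, hrowu, hzu, sub_zero, sub_ne_zero]
  exact fun huw => (hhu w).1 huw.symm rfl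

theorem rrk_coneOn_erase_of_generic (hp : Generic d p) (hq : Generic (d + 1) q)
    (hW : esupp F ⊆ W) {u w : V} (huw : u ≠ w) (hf : s(u, w) ∈ F)
    (hr : rrk d p ↑(F.erase s(u, w)) = rrk d p ↑F) :
    rrk (d + 1) q ↑(coneOn F (W.erase u)) = rrk (d + 1) q ↑(coneOn F W) := by
  have hu : u ∈ W := hW (mem_esupp.2 ⟨_, hf, Sym2.mem_mk_left u w⟩)
  apply le_antisymm (rrk_mono q (Finset.coe_subset.2
    (coneOn_mono subset_rfl (Finset.erase_subset u W))))
  let h : V → ℝ := Function.update 1 w 2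
  have hh : ∀ t, h t ≠ 0 := by
    intro t
    by_cases htw : t = w <;> simp [h, htw]
  have hhu : ∀ t, h t = h u ↔ t ≠ w := by
    intro t
    by_cases htw : t = w <;> simp [h, htw, huw]
  obtain ⟨y, hy, hker, hyu⟩ := exists_mem_span_coneOn_apply_ne_zero hh hhu hf hr (W.erase u)
  have hlt := lt_rrk_coneOn (by rwa [coneHeight_coneLift]) (Finset.notMem_erase u W) hy hker hyu
  rw [centralProjection_coneLift p hh] at hlt
  have hmax := hq.rrk_le_rrk (coneLift p h) ↑(coneOn F (W.erase u))
  have hcard := Finset.card_erase_add_one hu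
  rw [rrk_coneOn_of_generic hp hq hW]
  omega

end GenericRank

section KFoldCircuit

variable [Fintype V] {p : V → Fin d → ℝ} {q : Option V → Fin (d + 1) → ℝ} {D : Finset (Sym2 V)}
  {k : ℕ}

theorem isKFoldCircuit_iff_rrk_erase :
    IsKFoldCircuit d p D k ↔
      (∀ f ∈ D, rrk d p ↑(D.erase f) = rrk d p ↑D) ∧ rrk d p ↑D + k = D.card := by
  simp only [IsKFoldCircuit, Finset.coe_erase]

theorem isKFoldCircuit_coneOn_iff (hp : Generic d p) (hq : Generic (d + 1) q)
    (hD : ∀ e ∈ D, ¬ e.IsDiag) :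
    IsKFoldCircuit d p D k ↔ IsKFoldCircuit (d + 1) q (coneOn D (esupp D)) k := by
  have hrank : rrk (d + 1) q ↑(coneOn D (esupp D)) = rrk d p ↑D + (esupp D).card :=
    rrk_coneOn_of_generic hp hq subset_rfl
  have hrank_erase (f : Sym2 V) : rrk (d + 1) q ↑((coneOn D (esupp D)).erase (Sym2.map some f)) =
      rrk d p ↑(D.erase f) + (esupp D).card := by
    rw [coneOn_erase_map_some, rrk_coneOn_of_generic hp hq (esupp_mono (Finset.erase_subset f D))]
  rw [isKFoldCircuit_iff_rrk_erase, isKFoldCircuit_iff_rrk_erase, hrank, card_coneOn]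
  refine and_congr ⟨fun herase e he => ?_, fun herase f hf => ?_⟩ (by omega)
  · obtain ⟨f, hf, rfl⟩ | ⟨u, hu, rfl⟩ := mem_coneOn.1 he
    · rw [hrank_erase, herase f hf]
    · obtain ⟨_, hf, w, rfl⟩ := mem_esupp.1 hu
      rw [coneOn_erase_mk_none, rrk_coneOn_erase_of_generic hp hq subset_rfl
        (fun huw => hD _ hf (Sym2.mk_isDiag_iff.2 huw)) hf (herase _ hf), hrank]
  · have hf_cone := herase (Sym2.map some f) (map_some_mem_coneOn.2 hf)
    rw [hrank_erase] at hf_cone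
    exact Nat.add_right_cancel hf_cone

-- Suppose `f ∈ B₂ \ B₁`. Since `B₂.erase f` spans `f`, deleting `e` and then `f` keeps the rank of
-- `D` and leaves a set of corank `k - 2`, less than the corank `k - 1` of its subset `B₁`.
theorem IsKFoldCircuit.subset_of_notMem (hD : IsKFoldCircuit d p D k) {B₁ B₂ : Finset (Sym2 V)}
    (hB₁D : B₁ ⊆ D) (hB₁ : IsKFoldCircuit d p B₁ (k - 1)) (hB₂D : B₂ ⊆ D)
    (hB₂ : IsKFoldCircuit d p B₂ (k - 1)) {e : Sym2 V} (heD : e ∈ D) (heB₁ : e ∉ B₁)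
    (heB₂ : e ∉ B₂) : B₂ ⊆ B₁ := by
  intro f hfB₂
  by_contra hfB₁
  rw [isKFoldCircuit_iff_rrk_erase] at hD hB₁ hB₂
  have hB₂_erase : B₂.erase f ⊆ (D.erase e).erase f :=
    Finset.erase_subset_erase f (Finset.subset_erase.2 ⟨hB₂D, heB₂⟩)
  have hB₁_erase : B₁ ⊆ (D.erase e).erase f :=
    Finset.subset_erase.2 ⟨Finset.subset_erase.2 ⟨hB₁D, heB₁⟩, hfB₁⟩
  have hf : f ∈ D.erase e := Finset.mem_erase.2 ⟨fun hfe => heB₂ (hfe ▸ hfB₂), hB₂D hfB₂⟩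
  have hrank : rrk d p ↑((D.erase e).erase f) = rrk d p ↑D :=
    ((rrk_erase_eq_iff p hf).2 <| Submodule.span_mono
      (Set.image_mono (Finset.coe_subset.2 hB₂_erase))
      ((rrk_erase_eq_iff p hfB₂).1 (hB₂.1 f hfB₂))).trans (hD.1 e heD)
  have hle := rrk_le_rrk_add_card_sdiff p B₁ ((D.erase e).erase f)
  have hcard := Finset.card_sdiff_add_card_eq_card hB₁_erase
  have hcard_f := Finset.card_erase_add_one hf
  have hcard_e := Finset.card_erase_add_one heD
  have := hD.2
  have := hB₁.2
  omega

theorem IsPrincipalPart.eq_of_mem (hD : IsKFoldCircuit d p D k) {A₁ A₂ : Finset (Sym2 V)}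
    (hA₁ : IsPrincipalPart d p D k A₁) (hA₂ : IsPrincipalPart d p D k A₂) {e : Sym2 V}
    (he₁ : e ∈ A₁) (he₂ : e ∈ A₂) : A₁ = A₂ := by
  obtain ⟨B₁, hB₁D, hB₁, rfl⟩ := hA₁
  obtain ⟨B₂, hB₂D, hB₂, rfl⟩ := hA₂
  rw [Finset.mem_sdiff] at he₁ he₂
  rw [(hD.subset_of_notMem hB₁D hB₁ hB₂D hB₂ he₁.1 he₁.2 he₂.2).antisymm
    (hD.subset_of_notMem hB₂D hB₂ hB₁D hB₁ he₁.1 he₂.2 he₁.2)]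

theorem IsPrincipalPart.monochromatic_and_exists_mem_iff {A : Finset (Sym2 V)}
    (hA : IsPrincipalPart d p D k A) (hD : IsKFoldCircuit d p D k) {u : V} :
    (Monochromatic d p D k u ∧ ∃ f ∈ A, u ∈ f) ↔ u ∈ esupp D \ esupp (D \ A) := by
  have hAD : A ⊆ D := by
    obtain ⟨B, -, -, rfl⟩ := hA
    exact Finset.sdiff_subset
  rw [Finset.mem_sdiff, mem_esupp, mem_esupp]
  constructor
  · rintro ⟨⟨A₁, hA₁, hu⟩, f, hf, huf⟩
    obtain rfl := hA₁.eq_of_mem hD hA (hu f (hAD hf) huf) hf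
    refine ⟨⟨f, hAD hf, huf⟩, fun ⟨e, he, hue⟩ => ?_⟩
    rw [Finset.mem_sdiff] at he
    exact he.2 (hu e he.1 hue)
  · rintro ⟨⟨f, hf, huf⟩, hu⟩
    have hmem : ∀ e ∈ D, u ∈ e → e ∈ A := fun e he hue => by
      by_contra heA
      exact hu ⟨e, Finset.mem_sdiff.2 ⟨he, heA⟩, hue⟩
    exact ⟨⟨A, hA, hmem⟩, f, hmem f hf huf, huf⟩

theorem isPrincipalPart_coneOn (hp : Generic d p) (hq : Generic (d + 1) q)
    (hD : ∀ e ∈ D, ¬ e.IsDiag) {A : Finset (Sym2 V)} (hA : IsPrincipalPart d p D k A) :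
    IsPrincipalPart (d + 1) q (coneOn D (esupp D)) k (coneOn A (esupp D \ esupp (D \ A))) := by
  obtain ⟨B, hBD, hB, rfl⟩ := hA
  refine ⟨coneOn B (esupp B), coneOn_mono hBD (esupp_mono hBD),
    (isKFoldCircuit_coneOn_iff hp hq fun e he => hD e (hBD he)).1 hB, ?_⟩
  rw [coneOn_sdiff_coneOn, Finset.sdiff_sdiff_eq_self hBD]

end KFoldCircuit

end Cone

/-- Lemma 4.1: coning preserves `k`-fold circuits, and every part of the principal
partition extends to a part of the principal partition of the cone by adding the
cone edges at the monochromatic vertices of that part. -/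
theorem cone_kfold_circuit_and_principal_parts
    (d k : ℕ) (hd : 1 ≤ d) (hk : 1 ≤ k)
    {V : Type*} [Fintype V] [DecidableEq V]
    (D : Finset (Sym2 V)) (hsimple : ∀ e ∈ D, ¬ e.IsDiag)
    (hcov : ∀ w : V, ∃ e ∈ D, w ∈ e)
    (p : V → Fin d → ℝ) (hp : Generic d p)
    (q : Option V → Fin (d+1) → ℝ) (hq : Generic (d+1) q) :
    (IsKFoldCircuit d p D k ↔ IsKFoldCircuit (d+1) q (coneEdges D) k) ∧
    (IsKFoldCircuit d p D k →
      ∀ A : Finset (Sym2 V), IsPrincipalPart d p D k A →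
      ∀ A' : Finset (Sym2 (Option V)),
        (∀ e' : Sym2 (Option V), e' ∈ A' ↔
          ((∃ f ∈ A, e' = Sym2.map Option.some f) ∨
            ∃ u : V, Monochromatic d p D k u ∧ (∃ f ∈ A, u ∈ f) ∧
              e' = s((Option.some u : Option V), (none : Option V)))) →
        IsPrincipalPart (d+1) q (coneEdges D) k A') := by
  have hcone : coneEdges D = coneOn D (esupp D) := by
    rw [Finset.eq_univ_iff_forall.2 fun u => mem_esupp.2 (hcov u)]
    rfl
  rw [hcone]
  refine ⟨isKFoldCircuit_coneOn_iff hp hq hsimple, fun hD A hA A' hA' => ?_⟩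
  have hA'_eq : A' = coneOn A (esupp D \ esupp (D \ A)) := by
    ext e
    simp only [hA', mem_coneOn, ← hA.monochromatic_and_exists_mem_iff hD, and_assoc]
  rw [hA'_eq]
  exact isPrincipalPart_coneOn hp hq hsimple hA
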